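/- arXiv:2409.00545 — 3 statements merged into one kernel-verified Lean document; each statement's English description precedes it below -/
import Mathlib

section
/- Assume GCH. Let κ be an uncountable cardinal and G a κ-existentially closed group of cardinality κ. Then there is a chain of subgroups {G_λ} indexed by the regular cardinals λ ≤ κ, increasing with λ, with union G, such that each G_λ is a λ-existentially closed group of cardinality λ and G_κ = G. -/
universe u

/-- `G` is `κ`-existentially closed: every system of fewer than `κ` equations and fewer than
`κ` inequations (words in the free product of `G` with free variables `X`), which has a
solution in some overgroup of `G`, already has a solution in `G`. -/
def IsKappaEC (κ : Cardinal.{u}) (G : Type u) [Group G] : Prop :=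
  ∀ (X : Type u) (eqs ineqs : Set (FreeGroup (G ⊕ X))),
    Cardinal.mk eqs < κ → Cardinal.mk ineqs < κ →
    (∃ (H : Type u) (_ : Group H) (i : G →* H), Function.Injective i ∧
      ∃ v : X → H,
        (∀ w ∈ eqs, FreeGroup.lift (Sum.elim (⇑i) v) w = 1) ∧
        (∀ w ∈ ineqs, FreeGroup.lift (Sum.elim (⇑i) v) w ≠ 1)) →
    ∃ v : X → G,
      (∀ w ∈ eqs, FreeGroup.lift (Sum.elim (id : G → G) v) w = 1) ∧
      (∀ w ∈ ineqs, FreeGroup.lift (Sum.elim (id : G → G) v) w ≠ 1)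

/-- The generalized continuum hypothesis. -/
def GCH : Prop := ∀ c : Cardinal.{u}, Cardinal.aleph0 ≤ c → 2 ^ c = Order.succ c

open Cardinal

theorem Lmk (l : Cardinal.{u}) : #l.ord.ToType = l := by simp

theorem Iio_lt (l : Cardinal.{u}) (x : l.ord.ToType) : #(Set.Iio x) < l := by
  exact mk_Iio_toType_ord_lt x

theorem bdd (l : Cardinal.{u}) (hl : l.IsRegular) (s : Set l.ord.ToType) (hs : #s < l) :
    ∃ x, s ⊆ Set.Iio x := by
  by_contra h
  push Not at h
  have : IsCofinal s := by
    intro x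
    obtain ⟨y, hy, hyx⟩ := Set.not_subset.1 (h x)
    exact ⟨y, hy, not_lt.1 hyx⟩
  have h2 := Order.cof_le this
  rw [Ordinal.cof_toType, hl.cof_ord] at h2
  exact absurd hs (not_lt.2 h2)

theorem pow_small (hG : GCH.{u}) (l : Cardinal.{u}) (hl : l.IsRegular) (a c : Cardinal.{u})
    (ha : a < l) (hc : c < l) : a ^ c ≤ l := by
  by_cases h : max a c < ℵ₀
  · exact ((power_lt_aleph0 (lt_of_le_of_lt (le_max_left _ _) h) (lt_of_le_of_lt (le_max_right _ _) h)).trans_le hl.1).le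
  · push Not at h
    calc a ^ c ≤ (max a c) ^ (max a c) :=
        (power_le_power_right (le_max_left _ _)).trans
          (power_le_power_left (fun h0 => aleph0_ne_zero (le_antisymm (h.trans h0.le) zero_le)) (le_max_right _ _))
      _ = 2 ^ (max a c) := power_self_eq h
      _ = Order.succ (max a c) := hG _ h
      _ ≤ l := Order.succ_le_of_lt (max_lt ha hc)

theorem pow_le (hG : GCH.{u}) (l : Cardinal.{u}) (hl : l.IsRegular) (c : Cardinal.{u})
    (hc : c < l) : l ^ c ≤ l := by
  induction c using Cardinal.inductionOn with | _ γ
  have h1 : #(γ → l.ord.ToType) ≤ #(Σ x : l.ord.ToType, (γ → Set.Iio x)) := by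
    apply mk_le_of_surjective (f := fun p i => (p.2 i).1)
    intro f
    obtain ⟨x, hx⟩ := bdd l hl (Set.range f) (mk_range_le.trans_lt hc)
    exact ⟨⟨x, fun i => ⟨f i, hx ⟨i, rfl⟩⟩⟩, rfl⟩
  have h2 : #(Σ x : l.ord.ToType, (γ → Set.Iio x)) ≤ l * l := by
    rw [mk_sigma]
    refine (sum_le_sum _ (fun _ => l) fun x => ?_).trans (by simp)
    simpa using pow_small hG l hl _ _ (Iio_lt l x) hc
  rw [mul_eq_self hl.1] at h2
  simpa using h1.trans h2

theorem sets_le (hG : GCH.{u}) (l : Cardinal.{u}) (hl : l.IsRegular) (α : Type u)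
    (hα : #α ≤ l) : #{s : Set α // #s < l} ≤ l := by
  have h1 : #{s : Set α // #s < l} ≤ #(Σ x : l.ord.ToType, (Set.Iio x → Option α)) := by
    apply mk_le_of_surjective (f := fun p => ⟨{a | some a ∈ Set.range p.2}, by
      refine lt_of_le_of_lt ?_ (Iio_lt l p.1)
      have : #{a | some a ∈ Set.range p.2} ≤ #(Set.range p.2) :=
        mk_le_of_injective (f := fun a => ⟨some a.1, a.2⟩) (by
          intro a b hab
          simpa [Subtype.ext_iff] using hab)
      exact this.trans mk_range_le⟩)
    rintro ⟨s, hs⟩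
    have : #s ≤ #l.ord.ToType := by simpa using hs.le
    obtain ⟨e⟩ := this
    obtain ⟨x, hx⟩ := bdd l hl (Set.range e) (mk_range_le.trans_lt hs)
    refine ⟨⟨x, fun y => by
      classical
      exact if h : ∃ a, e a = y.1 then some h.choose.1 else none⟩, ?_⟩
    ext a
    simp only [Set.mem_range, Set.mem_ofPred_eq]
    constructor
    · rintro ⟨y, hy⟩
      split_ifs at hy with h
      simp only [Option.some.injEq] at hy
      rw [← hy]; exact h.choose.2
    · intro ha
      refine ⟨⟨e ⟨a, ha⟩, hx ⟨_, rfl⟩⟩, ?_⟩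
      have h : ∃ b, e b = e ⟨a, ha⟩ := ⟨_, rfl⟩
      rw [dif_pos h]
      have := e.injective h.choose_spec
      rw [this]
  have h2 : #(Σ x : l.ord.ToType, (Set.Iio x → Option α)) ≤ l * l := by
    rw [mk_sigma]
    refine (sum_le_sum _ (fun _ => l) fun x => ?_).trans (by simp)
    have h3 : #(Option α) ≤ l := by
      rw [mk_option]
      exact (add_le_add hα (one_le_aleph0.trans hl.1)).trans (add_eq_self hl.1).le
    have := pow_le hG l hl _ (Iio_lt l x)
    rw [← power_def]
    exact (power_le_power_right h3).trans this
  rw [mul_eq_self hl.1] at h2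
  exact h1.trans h2

def AmF (G H : Type u) : Bool → Type u
  | false => G
  | true => H

instance AmF.grp (G H : Type u) [Group G] [Group H] : ∀ b, Group (AmF G H b)
  | false => inferInstanceAs (Group G)
  | true => inferInstanceAs (Group H)

def AmF.hom {S G H : Type u} [Group S] [Group G] [Group H] (i : S →* G) (j : S →* H) :
    ∀ b, S →* AmF G H b
  | false => i
  | true => j

theorem amalg {S G H : Type u} [Group S] [Group G] [Group H] (i : S →* G) (j : S →* H)
    (hi : Function.Injective i) (hj : Function.Injective j) :
    ∃ (K : Type u) (_ : Group K) (a : G →* K) (b : H →* K), Function.Injective a ∧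
      Function.Injective b ∧ a.comp i = b.comp j := by
  have hφ : ∀ b, Function.Injective (AmF.hom i j b) := by
    rintro (_|_)
    · exact hi
    · exact hj
  refine ⟨Monoid.PushoutI (AmF.hom i j), inferInstance,
    Monoid.PushoutI.of (φ := AmF.hom i j) false,
    Monoid.PushoutI.of (φ := AmF.hom i j) true, Monoid.PushoutI.of_injective hφ false,
    Monoid.PushoutI.of_injective hφ true, ?_⟩
  exact (Monoid.PushoutI.of_comp_eq_base (φ := AmF.hom i j) false).trans
    (Monoid.PushoutI.of_comp_eq_base (φ := AmF.hom i j) true).symm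

def letters {α : Type u} (w : FreeGroup α) : Set α := 
  letI := Classical.decEq α
  {a | a ∈ w.toWord.map Prod.fst}

theorem letters_fin {α : Type u} (w : FreeGroup α) : (letters w).Finite :=
  List.finite_toSet _

theorem lift_congr {α K : Type u} [Group K] (f g : α → K) (w : FreeGroup α)
    (h : ∀ a ∈ letters w, f a = g a) : FreeGroup.lift f w = FreeGroup.lift g w := by
  classical
  rw [← FreeGroup.mk_toWord (x := w), FreeGroup.lift_mk, FreeGroup.lift_mk]
  congr 1
  apply List.map_congr_left
  rintro ⟨a, b⟩ hab
  have : f a = g a := h a (by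
    unfold letters
    simp only [Set.mem_ofPred_eq, List.mem_map]
    exact ⟨(a, b), by convert hab, rfl⟩)
  simp [this]

theorem hull0 (hGCH : GCH.{u}) (l : Cardinal.{u}) (hl : l.IsRegular) (G : Type u) [Group G]
    (A : Set G) (hA : #A ≤ l) (I : Type u) (β : I → Type u) (hI : #I ≤ l)
    (hβ : ∀ i, #(β i) < l) (op : ∀ i, (β i → G) → G) :
    ∃ S : Subgroup G, A ⊆ S ∧ #S ≤ l ∧ ∀ i f, (∀ b, f b ∈ S) → op i f ∈ S := by
  let J : Type u := Option A ⊕ (I ⊕ PUnit.{u+1})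
  let B : J → Type u := Sum.elim (fun _ => PEmpty) (Sum.elim β (fun _ => ULift Bool))
  let ev : WType B → G := fun t => WType.elim G (fun p : Σ j : J, (B j → G) =>
    match p with
    | ⟨Sum.inl none, _⟩ => 1
    | ⟨Sum.inl (some a), _⟩ => a.1
    | ⟨Sum.inr (Sum.inl i), f⟩ => op i f
    | ⟨Sum.inr (Sum.inr _), f⟩ => f ⟨true⟩ * (f ⟨false⟩)⁻¹) t
  have hdiv : ∀ x ∈ Set.range ev, ∀ y ∈ Set.range ev, x * y⁻¹ ∈ Set.range ev := by
    rintro _ ⟨s, rfl⟩ _ ⟨t, rfl⟩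
    exact ⟨WType.mk (β := B) (Sum.inr (Sum.inr ⟨⟩)) (fun b : ULift Bool => if b.down then s else t), rfl⟩
  have h1 : (1 : G) ∈ Set.range ev := ⟨WType.mk (β := B) (Sum.inl none) (fun x => x.elim), rfl⟩
  have hinv : ∀ y ∈ Set.range ev, y⁻¹ ∈ Set.range ev := fun y hy => by
    simpa using hdiv 1 h1 y hy
  let S : Subgroup G :=
    { carrier := Set.range ev
      one_mem' := h1
      mul_mem' := fun {x y} hx hy => by
        simpa using hdiv x hx _ (hinv y hy)
      inv_mem' := fun {y} hy => hinv y hy }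
  have hω := hl.1
  have hJ : #J ≤ l := by
    simp only [J, mk_sum, mk_option, lift_id, mk_punit]
    refine add_le_of_le hω (add_le_of_le hω hA ?_) (add_le_of_le hω hI ?_) <;>
      exact one_le_aleph0.trans hω
  have hB : ∀ j, #(B j) < l := by
    rintro (a | i | _)
    · simpa [B] using hl.pos
    · exact hβ i
    · simpa [B] using hl.nat_lt 2
  refine ⟨S, ?_, ?_, ?_⟩
  · intro a ha
    exact ⟨WType.mk (β := B) (Sum.inl (some ⟨a, ha⟩)) (fun x => x.elim), rfl⟩
  · refine (mk_range_le (f := ev)).trans ?_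
    apply WType.cardinalMk_le_of_le
    refine (sum_le_sum _ (fun _ => l) fun j => pow_le hGCH l hl _ (hB j)).trans ?_
    simp only [sum_const, lift_id]
    exact mul_le_of_le hω hJ le_rfl
  · intro i f hf
    choose t ht using hf
    refine ⟨WType.mk (β := B) (Sum.inr (Sum.inl i)) t, ?_⟩
    change op i (fun b => ev (t b)) = _
    congr 1
    funext b
    exact ht b

open Classical in
noncomputable def extP {L G : Type u} [One G] (P : Set L) (g : P → G) : L → G :=
  fun x => if h : x ∈ P then g ⟨x, h⟩ else 1

def Sol {L G : Type u} [Group G] (P : Set L) (E N : Set (FreeGroup (L ⊕ L))) (g : P → G)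
    (v : L → G) : Prop :=
  (∀ w ∈ E, FreeGroup.lift (Sum.elim (extP P g) v) w = 1) ∧
  (∀ w ∈ N, FreeGroup.lift (Sum.elim (extP P g) v) w ≠ 1)

open Classical in
noncomputable def theSol {L G : Type u} [Group G] (P : Set L) (E N : Set (FreeGroup (L ⊕ L)))
    (g : P → G) : L → G :=
  if h : ∃ v, Sol P E N g v then h.choose else 1

theorem theSol_spec {L G : Type u} [Group G] (P : Set L) (E N : Set (FreeGroup (L ⊕ L)))
    (g : P → G) (h : ∃ v, Sol P E N g v) : Sol P E N g (theSol P E N g) := by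
  unfold theSol
  rw [dif_pos h]
  exact h.choose_spec

theorem lift_map' {α β K : Type u} [Group K] (f : β → K) (φ : α → β) (w : FreeGroup α) :
    FreeGroup.lift f (FreeGroup.map φ w) = FreeGroup.lift (f ∘ φ) w := by
  have : (FreeGroup.lift f).comp (FreeGroup.map φ) = FreeGroup.lift (f ∘ φ) := by
    ext a; simp
  exact DFunLike.congr_fun this w

theorem hom_lift {α K M : Type u} [Group K] [Group M] (h : K →* M) (f : α → K) (w : FreeGroup α) :
    h (FreeGroup.lift f w) = FreeGroup.lift (h ∘ f) w := by
  have : h.comp (FreeGroup.lift f) = FreeGroup.lift (h ∘ f) := by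
    ext a; simp
  exact DFunLike.congr_fun this w

/-- A system over a subgroup solvable in an overgroup of the subgroup is solvable in `G`. -/
theorem solve_in {κ l : Cardinal.{u}} (hlκ : l ≤ κ) {G : Type u} [Group G] (hG : IsKappaEC κ G)
    (S : Subgroup G) (X : Type u) (eqs ineqs : Set (FreeGroup (S ⊕ X)))
    (h1 : #eqs < l) (h2 : #ineqs < l)
    (h : ∃ (H : Type u) (_ : Group H) (i : S →* H), Function.Injective i ∧
      ∃ v : X → H,
        (∀ w ∈ eqs, FreeGroup.lift (Sum.elim (⇑i) v) w = 1) ∧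
        (∀ w ∈ ineqs, FreeGroup.lift (Sum.elim (⇑i) v) w ≠ 1)) :
    ∃ v : X → G,
      (∀ w ∈ eqs, FreeGroup.lift (Sum.elim (Subtype.val : S → G) v) w = 1) ∧
      (∀ w ∈ ineqs, FreeGroup.lift (Sum.elim (Subtype.val : S → G) v) w ≠ 1) := by
  obtain ⟨H, _, i, hi, v, hv1, hv2⟩ := h
  obtain ⟨K, _, a, b, ha, hb, hab⟩ := amalg S.subtype i S.subtype_injective hi
  let φ : S ⊕ X → G ⊕ X := Sum.map Subtype.val id
  have key : ∀ w, FreeGroup.lift (Sum.elim a (b ∘ v)) (FreeGroup.map φ w)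
      = b (FreeGroup.lift (Sum.elim i v) w) := by
    intro w
    rw [lift_map', hom_lift]
    congr 2
    funext x
    rcases x with s | x
    · exact DFunLike.congr_fun hab s
    · rfl
  obtain ⟨u, hu1, hu2⟩ := hG X (FreeGroup.map φ '' eqs) (FreeGroup.map φ '' ineqs)
    ((mk_image_le.trans_lt h1).trans_le hlκ) ((mk_image_le.trans_lt h2).trans_le hlκ)
    ⟨K, inferInstance, a, ha, b ∘ v, by
      rintro _ ⟨w, hw, rfl⟩
      rw [key, hv1 w hw, map_one], by
      rintro _ ⟨w, hw, rfl⟩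
      rw [key, Ne, map_eq_one_iff b hb]
      exact hv2 w hw⟩
  have key2 : ∀ w, FreeGroup.lift (Sum.elim (id : G → G) u) (FreeGroup.map φ w)
      = FreeGroup.lift (Sum.elim (Subtype.val : S → G) u) w := by
    intro w
    rw [lift_map']
    congr 2
    funext x
    rcases x with s | x <;> rfl
  refine ⟨u, fun w hw => ?_, fun w hw => ?_⟩
  · rw [← key2]; exact hu1 _ ⟨w, hw, rfl⟩
  · rw [← key2]; exact hu2 _ ⟨w, hw, rfl⟩

theorem hull (hGCH : GCH.{u}) (κ l : Cardinal.{u}) (hl : l.IsRegular) (hlκ : l ≤ κ)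
    (G : Type u) [Group G] (hG : IsKappaEC κ G) (A : Set G) (hA : #A ≤ l) :
    ∃ S : Subgroup G, A ⊆ S ∧ #S ≤ l ∧ IsKappaEC l S := by
  classical
  let L : Type u := l.ord.ToType
  have hLc : #L = l := Lmk l
  have hω := hl.1
  have : Nonempty L := by
    rw [← mk_ne_zero_iff, hLc]; exact hl.pos.ne'
  let W : Type u := FreeGroup (L ⊕ L)
  have hW : #W ≤ l := by
    simp only [W, mk_freeGroup, mk_sum, lift_id, hLc]
    exact max_le (add_le_of_le hω le_rfl le_rfl) hω
  let I : Type u := {P : Set L // #P < l} × {E : Set W // #E < l} × {E : Set W // #E < l} × L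
  have hI : #I ≤ l := by
    simp only [I, mk_prod, lift_id]
    have e1 := sets_le hGCH l hl L hLc.le
    have e2 := sets_le hGCH l hl W hW
    exact mul_le_of_le hω e1 (mul_le_of_le hω e2 (mul_le_of_le hω e2 hLc.le))
  obtain ⟨S, hAS, hS, hop⟩ := hull0 hGCH l hl G A hA I (fun i => i.1.1) hI (fun i => i.1.2)
    (fun i g => theSol i.1.1 i.2.1.1 i.2.2.1.1 g i.2.2.2)
  refine ⟨S, hAS, hS, ?_⟩
  intro X eqs ineqs h1 h2 h
  obtain ⟨v, hv1, hv2⟩ := solve_in hlκ hG S X eqs ineqs h1 h2 h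
  let T : Set (FreeGroup (S ⊕ X)) := eqs ∪ ineqs
  have hT : #T < l := (mk_union_le _ _).trans_lt (add_lt_of_lt hω h1 h2)
  let Q : Set (S ⊕ X) := ⋃ w ∈ T, letters w
  have hQ : #Q < l := by
    refine (card_biUnion_lt_iff_forall_of_isRegular hl hT).2 fun w _ => ?_
    exact (letters_fin w).lt_aleph0.trans_le hω
  have hPs : #(Sum.inl ⁻¹' Q : Set S) < l :=
    (mk_preimage_of_injective _ _ Sum.inl_injective).trans_lt hQ
  have hXs : #(Sum.inr ⁻¹' Q : Set X) < l :=
    (mk_preimage_of_injective _ _ Sum.inr_injective).trans_lt hQ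
  obtain ⟨eS⟩ : Nonempty (S ↪ L) := by
    have : #S ≤ #L := by rw [hLc]; exact hS
    exact this
  obtain ⟨e⟩ : Nonempty ((Sum.inr ⁻¹' Q : Set X) ↪ L) := by
    have : #(Sum.inr ⁻¹' Q : Set X) ≤ #L := by rw [hLc]; exact hXs.le
    exact this
  let eX : X → L := fun x => if h : x ∈ (Sum.inr ⁻¹' Q : Set X) then e ⟨x, h⟩
    else Classical.arbitrary L
  let P : Set L := eS '' (Sum.inl ⁻¹' Q)
  have hP : #P < l := mk_image_le.trans_lt hPs
  let g : P → G := fun p => Function.extend eS Subtype.val 1 p.1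
  have hgS : ∀ p, g p ∈ S := by
    rintro ⟨_, s, hs, rfl⟩
    simp only [g, eS.injective.extend_apply]
    exact s.2
  have hext : ∀ s : S, Sum.inl s ∈ Q → extP P g (eS s) = s := by
    intro s hs
    have hm : eS s ∈ P := ⟨s, hs, rfl⟩
    unfold extP
    rw [dif_pos hm]
    simp only [g, eS.injective.extend_apply]
  let φ : S ⊕ X → L ⊕ L := Sum.map eS eX
  have key : ∀ (u : L → G) (u' : X → G), (∀ x, Sum.inr x ∈ Q → u (eX x) = u' x) → ∀ w ∈ T,
      FreeGroup.lift (Sum.elim (extP P g) u) (FreeGroup.map φ w)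
      = FreeGroup.lift (Sum.elim (Subtype.val : S → G) u') w := by
    intro u u' huu w hw
    rw [lift_map']
    apply lift_congr
    intro a ha
    have haQ : a ∈ Q := Set.mem_biUnion hw ha
    rcases a with s | x
    · exact hext s haQ
    · exact huu x haQ
  let E : Set W := FreeGroup.map φ '' eqs
  let N : Set W := FreeGroup.map φ '' ineqs
  have hE : #E < l := mk_image_le.trans_lt h1
  have hN : #N < l := mk_image_le.trans_lt h2
  have hex : ∃ u, Sol P E N g u := by
    refine ⟨Function.extend e (fun x => v x.1) 1, ?_⟩
    have hk := key (Function.extend e (fun x => v x.1) 1) v (by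
      intro x hx
      have hx' : x ∈ (Sum.inr ⁻¹' Q : Set X) := hx
      simp only [eX]
      rw [dif_pos hx', e.injective.extend_apply])
    refine ⟨?_, ?_⟩
    · rintro _ ⟨w, hw, rfl⟩
      rw [hk w (Or.inl hw)]; exact hv1 w hw
    · rintro _ ⟨w, hw, rfl⟩
      rw [hk w (Or.inr hw)]; exact hv2 w hw
  have hsol := theSol_spec P E N g hex
  have hmem : ∀ x : L, theSol P E N g x ∈ S := fun x =>
    hop (⟨P, hP⟩, ⟨E, hE⟩, ⟨N, hN⟩, x) g hgS
  let r : X → S := fun x => ⟨theSol P E N g (eX x), hmem _⟩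
  have hk := key (theSol P E N g) (fun x => (r x : G)) (fun _ _ => rfl)
  have hr : ∀ w, ((FreeGroup.lift (Sum.elim (id : S → S) r) w : S) : G)
      = FreeGroup.lift (Sum.elim (Subtype.val : S → G) (fun x => (r x : G))) w := by
    intro w
    have := hom_lift S.subtype (Sum.elim (id : S → S) r) w
    refine this.trans ?_
    congr 2
    funext x
    rcases x with s | x <;> rfl
  refine ⟨r, fun w hw => ?_, fun w hw h0 => ?_⟩
  · apply Subtype.ext
    rw [hr, ← hk w (Or.inl hw)]
    exact hsol.1 _ ⟨w, hw, rfl⟩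
  · apply hsol.2 _ ⟨w, hw, rfl⟩
    rw [hk w (Or.inr hw), ← hr, h0]
    rfl

/-- Under GCH, a `κ`-existentially closed group `G` of cardinality `κ` (`κ` uncountable)
has a chain of subgroups `{G_λ}`, indexed by the regular cardinals `λ ≤ κ`, increasing
with `λ`, with union `G`, such that each `G_λ` is a `λ`-existentially closed group of
cardinality `λ`, and `G_κ = G`. -/
theorem stmt_12 (hGCH : GCH.{u}) (κ : Cardinal.{u}) (hκ : Cardinal.aleph0 < κ)
    (G : Type u) [Group G] (hG : IsKappaEC κ G) (hcard : Cardinal.mk G = κ) :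
    ∃ Gs : Cardinal.{u} → Subgroup G,
      (∀ lam mu : Cardinal.{u}, lam.IsRegular → mu.IsRegular → lam ≤ mu → mu ≤ κ →
        Gs lam ≤ Gs mu) ∧
      (∀ lam : Cardinal.{u}, lam.IsRegular → lam ≤ κ →
        IsKappaEC lam (Gs lam) ∧ Cardinal.mk (Gs lam) = lam) ∧
      (∀ x : G, ∃ lam : Cardinal.{u}, lam.IsRegular ∧ lam ≤ κ ∧ x ∈ Gs lam) ∧
      Gs κ = ⊤ := by
  classical
  obtain ⟨e⟩ : Nonempty (G ≃ κ.ord.ToType) := by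
    rw [← Cardinal.eq, Lmk, hcard]
  let r : G → Ordinal.{u} := fun x => Ordinal.typein (α := κ.ord.ToType) (· < ·) (e x)
  have hr : ∀ x, r x < κ.ord := fun x => Ordinal.typein_lt_self _
  let T : Cardinal.{u} → Set G := fun l => {x | r x < l.ord}
  have hT : ∀ l ≤ κ, #(T l) = l := by
    intro l hl
    have hb : Function.Bijective (fun x : T l => (⟨r x.1, x.2⟩ : Set.Iio l.ord)) := by
      constructor
      · intro x y hxy
        have : r x.1 = r y.1 := congrArg Subtype.val hxy
        exact Subtype.ext (e.injective ((Ordinal.typein (α := κ.ord.ToType) (· < ·)).injective this))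
      · rintro ⟨o, ho⟩
        have ho' : o < l.ord := ho
        obtain ⟨i, hi⟩ := Ordinal.typein_surj (α := κ.ord.ToType) (· < ·) (o := o) (by
          rw [Ordinal.type_toType]; exact ho'.trans_le (ord_le_ord.2 hl))
        have hri : r (e.symm i) = o := by
          simp only [r, Equiv.apply_symm_apply]; exact hi
        exact ⟨⟨e.symm i, by change r _ < _; rw [hri]; exact ho'⟩, Subtype.ext hri⟩
    have := mk_congr_lift (Equiv.ofBijective _ hb)
    rw [mk_Iio_ordinal, card_ord] at this
    simpa using this
  let hu : Cardinal.{u} → Set G → Subgroup G := fun l A =>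
    if h : ∃ S : Subgroup G, A ⊆ S ∧ #S ≤ l ∧ IsKappaEC l S then h.choose else ⊤
  have hhu : ∀ l : Cardinal.{u}, l.IsRegular → l ≤ κ → ∀ A : Set G, #A ≤ l →
      A ⊆ hu l A ∧ #(hu l A) ≤ l ∧ IsKappaEC l (hu l A) := by
    intro l hl hlκ A hA
    have h := hull hGCH κ l hl hlκ G hG A hA
    have heq : hu l A = h.choose := dif_pos h
    rw [heq]
    exact h.choose_spec
  let F : (l : Cardinal.{u}) → ((m : Cardinal.{u}) → m < l → Subgroup G) → Subgroup G :=
    fun l ih => if l.IsRegular then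
      hu l (T l ∪ {x | ∃ (m : Cardinal.{u}) (h : m < l), m.IsRegular ∧ x ∈ ih m h}) else ⊤
  let Gs : Cardinal.{u} → Subgroup G := WellFounded.fix Cardinal.lt_wf F
  let B : Cardinal.{u} → Set G := fun l =>
    T l ∪ {x | ∃ (m : Cardinal.{u}) (_ : m < l), m.IsRegular ∧ x ∈ Gs m}
  have hGs : ∀ l : Cardinal.{u}, l.IsRegular → Gs l = hu l (B l) := by
    intro l hl
    have := WellFounded.fix_eq Cardinal.lt_wf F l
    refine this.trans ?_
    exact if_pos hl
  have hGs' : ∀ l : Cardinal.{u}, ¬ l.IsRegular → Gs l = ⊤ := by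
    intro l hl
    have := WellFounded.fix_eq Cardinal.lt_wf F l
    refine this.trans ?_
    exact if_neg hl
  have hB : ∀ l : Cardinal.{u}, l.IsRegular → l ≤ κ → #(B l) ≤ l := by
    intro l
    induction l using Cardinal.lt_wf.induction with | _ l ih
    intro hl hlκ
    refine (mk_union_le _ _).trans (add_le_of_le hl.1 (hT l hlκ).le ?_)
    have hm : ∀ m : Cardinal.{u}, m < l → m.IsRegular → #(Gs m) ≤ m := fun m hml hm => by
      rw [hGs m hm]
      exact (hhu m hm (hml.le.trans hlκ) _ (ih m hml hm (hml.le.trans hlκ))).2.1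
    let D : l.ord.ToType → Set G := fun i =>
      {x | #(Set.Iio i) < l ∧ (#(Set.Iio i)).IsRegular ∧ x ∈ Gs #(Set.Iio i)}
    have hsub : {x | ∃ (m : Cardinal.{u}) (_ : m < l), m.IsRegular ∧ x ∈ Gs m} ⊆ ⋃ i, D i := by
      rintro x ⟨m, hml, hmr, hx⟩
      obtain ⟨i, hi⟩ : ∃ i : l.ord.ToType, #(Set.Iio i) = m := by
        obtain ⟨i, hi⟩ := Ordinal.typein_surj (α := l.ord.ToType) (· < ·) (o := m.ord) (by
          rw [Ordinal.type_toType]; exact ord_lt_ord.2 hml)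
        refine ⟨i, ?_⟩
        have h5 := Ordinal.card_typein (r := fun a b : l.ord.ToType => a < b) i
        rw [hi, card_ord] at h5
        exact h5.symm
      refine Set.mem_iUnion.2 ⟨i, ?_⟩
      change _ ∧ _ ∧ _
      rw [hi]
      exact ⟨hml, hmr, hx⟩
    refine (mk_le_mk_of_subset hsub).trans (mk_iUnion_le_sum_mk.trans ?_)
    refine (sum_le_sum _ (fun _ => l) fun i => ?_).trans ?_
    · by_cases h : #(Set.Iio i) < l ∧ (#(Set.Iio i)).IsRegular
      · refine le_trans ?_ ((hm _ h.1 h.2).trans h.1.le)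
        exact mk_le_mk_of_subset (fun x hx => hx.2.2)
      · have : D i = ∅ := by
          ext x
          simp only [Set.mem_empty_iff_false, iff_false]
          exact fun hx => h ⟨hx.1, hx.2.1⟩
        rw [this]; simp
    · simp [mul_eq_self hl.1]
  have main : ∀ l : Cardinal.{u}, l.IsRegular → l ≤ κ →
      B l ⊆ Gs l ∧ #(Gs l) ≤ l ∧ IsKappaEC l (Gs l) := by
    intro l hl hlκ
    rw [hGs l hl]
    exact hhu l hl hlκ _ (hB l hl hlκ)
  have htop : Gs κ = ⊤ := by
    by_cases h : κ.IsRegular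
    · rw [eq_top_iff]
      intro x _
      exact (main κ h le_rfl).1 (Or.inl (hr x))
    · exact hGs' κ h
  refine ⟨Gs, ?_, ?_, ?_, htop⟩
  · intro l m hl hm hlm hmκ
    rcases hlm.eq_or_lt with rfl | hlt
    · exact le_rfl
    · intro x hx
      exact (main m hm hmκ).1 (Or.inr ⟨l, hlt, hl, hx⟩)
  · intro l hl hlκ
    obtain ⟨h1, h2, h3⟩ := main l hl hlκ
    refine ⟨h3, le_antisymm h2 ?_⟩
    calc l = #(T l) := (hT l hlκ).symm
      _ ≤ _ := mk_le_mk_of_subset (fun x hx => h1 (Or.inl hx))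
  · intro x
    by_cases h : κ.IsRegular
    · exact ⟨κ, h, le_rfl, by rw [htop]; trivial⟩
    · have hs : κ.IsSingular := IsSingular.of_not_isRegular hκ.le h
      let m := Order.succ (max (r x).card ℵ₀)
      have hreg : m.IsRegular := isRegular_succ (le_max_right _ _)
      have hlt : m < κ := hs.isSuccLimit.succ_lt (max_lt (lt_ord.1 (hr x)) hκ)
      refine ⟨m, hreg, hlt.le, (main m hreg hlt.le).1 (Or.inl ?_)⟩
      change r x < m.ord
      exact lt_ord.2 (Order.lt_succ_of_le (le_max_left _ _))
end

section
/- Assume GCH. Let G be a κ-existentially closed group of cardinality λ ≥ κ, and let μ ≤ κ be a regular cardinal. Then G has a local system consisting of μ-existentially closed subgroups of cardinality μ; that is, every finite subset of G is contained in some μ-existentially closed subgroup of cardinality μ, and the family of such subgroups is directed under inclusion. -/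
universe u

open Cardinal

namespace ECAux

lemma amalgam_aux {K : Type u} [Group K] (F : Bool → Type u) [∀ t, Group (F t)]
    (φ : ∀ t, K →* F t) (hφ : ∀ t, Function.Injective (φ t)) :
    ∃ (P : Type u) (_ : Group P) (j : F false →* P) (k : F true →* P),
      Function.Injective j ∧ Function.Injective k ∧ ∀ x, j (φ false x) = k (φ true x) := by
  refine ⟨Monoid.PushoutI φ, inferInstance, Monoid.PushoutI.of (φ := φ) false,
    Monoid.PushoutI.of (φ := φ) true, Monoid.PushoutI.of_injective hφ false,
    Monoid.PushoutI.of_injective hφ true, fun x => ?_⟩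
  exact (Monoid.PushoutI.of_apply_eq_base φ false x).trans
    (Monoid.PushoutI.of_apply_eq_base φ true x).symm

/-- Amalgamation of two overgroups over a common subgroup. -/
lemma amalgam {K G H : Type u} [Group K] [iG : Group G] [iH : Group H] (a : K →* G) (b : K →* H)
    (ha : Function.Injective a) (hb : Function.Injective b) :
    ∃ (P : Type u) (_ : Group P) (j : G →* P) (k : H →* P),
      Function.Injective j ∧ Function.Injective k ∧ ∀ x, j (a x) = k (b x) :=
  @amalgam_aux K _ (fun t => Bool.rec G H t) (fun t => Bool.rec iG iH t)
    (fun t => by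
      cases t
      · exact a
      · exact b)
    (fun t => by
      cases t
      · exact ha
      · exact hb)

lemma map_lift {α : Type u} {P Q : Type u} [Group P] [Group Q] (f : P →* Q) (g : α → P)
    (h : α → Q) (hh : ∀ a, h a = f (g a)) (w : FreeGroup α) :
    FreeGroup.lift h w = f (FreeGroup.lift g w) := by
  have : FreeGroup.lift h = f.comp (FreeGroup.lift g) := by
    ext a; simp [hh]
  rw [this]; rfl

lemma lift_map' {α β : Type u} {P : Type u} [Group P] (r : α → β) (g : β → P)
    (w : FreeGroup α) :
    FreeGroup.lift g (FreeGroup.map r w) = FreeGroup.lift (g ∘ r) w := by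
  have : (FreeGroup.lift g).comp (FreeGroup.map r) = FreeGroup.lift (g ∘ r) := by
    ext a; simp
  rw [← this]; rfl

lemma support {α : Type u} (w : FreeGroup α) :
    ∃ T : Set α, T.Finite ∧ ∀ (P : Type u) [Group P] (f g : α → P),
      (∀ a ∈ T, f a = g a) → FreeGroup.lift f w = FreeGroup.lift g w := by
  induction w using FreeGroup.induction_on with
  | C1 => exact ⟨∅, Set.finite_empty, fun P _ f g _ => by simp⟩
  | of a => exact ⟨{a}, Set.finite_singleton a, fun P _ f g h => by simpa using h⟩
  | inv_of a ih =>
    obtain ⟨T, hT, h⟩ := ih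
    exact ⟨T, hT, fun P _ f g hh => by rw [map_inv, map_inv, h P f g hh]⟩
  | mul x y hx hy =>
    obtain ⟨T, hT, h⟩ := hx
    obtain ⟨T', hT', h'⟩ := hy
    refine ⟨T ∪ T', hT.union hT', fun P _ f g hh => ?_⟩
    rw [map_mul, map_mul, h P f g (fun a ha => hh a (Or.inl ha)),
      h' P f g (fun a ha => hh a (Or.inr ha))]

lemma mk_iUnion_le' {ι α : Type u} {mu : Cardinal.{u}} (hmu : ℵ₀ ≤ mu) (f : ι → Set α)
    (hι : #ι ≤ mu) (hf : ∀ i, #(f i) ≤ mu) : #(⋃ i, f i) ≤ mu := by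
  calc #(⋃ i, f i) ≤ Cardinal.sum fun i => #(f i) := mk_iUnion_le_sum_mk
    _ ≤ Cardinal.sum fun _ : ι => mu := Cardinal.sum_le_sum _ _ hf
    _ = #ι * mu := by simp
    _ ≤ mu * mu := mul_le_mul_left hι mu
    _ = mu := mul_eq_self hmu

lemma mk_union_le' {α : Type u} {mu : Cardinal.{u}} (hmu : ℵ₀ ≤ mu) (s t : Set α)
    (hs : #s ≤ mu) (ht : #t ≤ mu) : #(s ∪ t : Set α) ≤ mu :=
  (mk_union_le s t).trans (add_le_of_le hmu hs ht)

lemma mk_free_le {α : Type u} {mu : Cardinal.{u}} (hmu : ℵ₀ ≤ mu) (h : #α ≤ mu) :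
    #(FreeGroup α) ≤ mu := by
  cases isEmpty_or_nonempty α
  · exact (mk_le_aleph0).trans hmu
  · rw [mk_freeGroup]; exact max_le h hmu

lemma mk_closure_le {G : Type u} [Group G] {mu : Cardinal.{u}} (hmu : ℵ₀ ≤ mu) (s : Set G)
    (h : #s ≤ mu) : #(Subgroup.closure s) ≤ mu := by
  rw [FreeGroup.closure_eq_range]
  exact (mk_le_of_surjective
    (MonoidHom.rangeRestrict_surjective (FreeGroup.lift (Subtype.val : s → G)))).trans
    (mk_free_le hmu h)

/-- Boundedness of small sets in the initial ordinal of a regular cardinal. -/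
lemma bounded_small {mu : Cardinal.{u}} (hmu : mu.IsRegular) (s : Set mu.ord.ToType)
    (hs : #s < mu) : ∃ t, ∀ x ∈ s, x < t := by
  by_contra hcon
  push Not at hcon
  have : IsCofinal s := fun t => by
    obtain ⟨x, hx, h⟩ := hcon t
    exact ⟨x, hx, h⟩
  have h := Order.cof_le this
  rw [Ordinal.cof_toType, hmu.cof_ord] at h
  exact absurd hs (not_lt.2 h)

lemma pow_le (hGCH : GCH.{u}) {mu c : Cardinal.{u}} (hmu : ℵ₀ ≤ mu) (hc : c < mu) :
    2 ^ c ≤ mu := by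
  rcases lt_or_ge c ℵ₀ with h | h
  · exact ((power_lt_aleph0 (natCast_lt_aleph0 (n := 2)) h).le).trans hmu
  · rw [hGCH c h]; exact Order.succ_le_of_lt hc

lemma mk_small_subsets (hGCH : GCH.{u}) {mu : Cardinal.{u}} (hmu : mu.IsRegular)
    {α : Type u} (hα : #α ≤ mu) : #{s : Set α // #s < mu} ≤ mu := by
  have h0 : #{s : Set mu.ord.ToType | #s < mu} ≤ mu := by
    have hsub : {s : Set mu.ord.ToType | #s < mu} ⊆
        ⋃ t : mu.ord.ToType, 𝒫 (Set.Iio t) := by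
      intro s hs
      obtain ⟨t, ht⟩ := bounded_small hmu s hs
      exact Set.mem_iUnion.2 ⟨t, ht⟩
    refine (mk_le_mk_of_subset hsub).trans (mk_iUnion_le' hmu.aleph0_le _ (by simp) ?_)
    intro t
    rw [mk_powerset]
    refine pow_le hGCH hmu.aleph0_le ?_
    have := mk_Iio_lt t (by simp)
    simpa using this
  have : #α ≤ #mu.ord.ToType := by simpa using hα
  obtain ⟨e⟩ := this
  refine le_trans (mk_le_of_injective
    (f := fun s : {s : Set α // #s < mu} =>
      (⟨e '' s.1, mk_image_le.trans_lt s.2⟩ : {s : Set mu.ord.ToType | #s < mu})) ?_) h0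
  intro s t hst
  have := congrArg Subtype.val hst
  exact Subtype.ext (e.injective.image_injective this)

/-- `v` solves the system in `G` with coefficients evaluated through `i`. -/
def Sol {K X P : Type u} [Group P] (i : K → P) (v : X → P)
    (E I : Set (FreeGroup (K ⊕ X))) : Prop :=
  (∀ w ∈ E, FreeGroup.lift (Sum.elim i v) w = 1) ∧
  (∀ w ∈ I, FreeGroup.lift (Sum.elim i v) w ≠ 1)

lemma step (hGCH : GCH.{u}) {mu : Cardinal.{u}} (hmu : mu.IsRegular) {G : Type u} [Group G]
    (V : Type u) (hV : #V = mu) (K : Subgroup G) :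
    ∃ D : Set G, (#K ≤ mu → #D ≤ mu) ∧ (K : Set G) ⊆ D ∧
      ∀ E I : Set (FreeGroup (K ⊕ V)), #E < mu → #I < mu →
        (∃ v : V → G, Sol (Subtype.val : K → G) v E I) →
        ∃ v : V → G, (∀ x, v x ∈ D) ∧ Sol (Subtype.val : K → G) v E I := by
  classical
  let S := {s : Set (FreeGroup (K ⊕ V)) // #s < mu}
  let sol : S × S → V → G := fun p =>
    if h : ∃ v : V → G, Sol (Subtype.val : K → G) v p.1.1 p.2.1 then h.choose else fun _ => 1
  refine ⟨(K : Set G) ∪ ⋃ p : S × S, Set.range (sol p), ?_, Set.subset_union_left, ?_⟩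
  · intro hK
    have hS : #S ≤ mu := mk_small_subsets hGCH hmu
      (mk_free_le hmu.aleph0_le (by
        rw [mk_sum, lift_id, lift_id]; exact add_le_of_le hmu.aleph0_le hK hV.le))
    refine mk_union_le' hmu.aleph0_le _ _ hK (mk_iUnion_le' hmu.aleph0_le _ ?_ ?_)
    · rw [← mul_def]
      exact (mul_le_mul' hS hS).trans (mul_eq_self hmu.aleph0_le).le
    · intro p
      exact mk_range_le.trans hV.le
  · intro E I hE hI h
    refine ⟨sol (⟨E, hE⟩, ⟨I, hI⟩), fun x => Or.inr (Set.mem_iUnion.2 ⟨_, x, rfl⟩), ?_⟩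
    have : sol (⟨E, hE⟩, ⟨I, hI⟩) = h.choose := dif_pos h
    rw [this]
    exact h.choose_spec

lemma biUnion_small {mu : Cardinal.{u}} (hmu : mu.IsRegular) {α β : Type u} (E : Set α)
    (hE : #E < mu) (T : α → Set β) (hT : ∀ a, (T a).Finite) :
    #(⋃ a : E, T a : Set β) < mu := by
  refine mk_iUnion_le_sum_mk.trans_lt (sum_lt_of_isRegular hmu hE fun a => ?_)
  exact ((hT a).lt_aleph0).trans_le hmu.aleph0_le

lemma main (hGCH : GCH.{u}) {κ mu : Cardinal.{u}} (hmu : mu.IsRegular) (hle : mu ≤ κ)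
    (G : Type u) [Group G] (hG : IsKappaEC κ G) (hcard : κ ≤ #G) (A₀ : Set G)
    (hA₀ : #A₀ ≤ mu) :
    ∃ K : Subgroup G, (IsKappaEC mu K ∧ #K = mu) ∧ A₀ ⊆ (K : Set G) := by
  classical
  have h0 := hmu.aleph0_le
  obtain ⟨A₁, hA₁⟩ := (le_mk_iff_exists_set (c := mu) (α := G)).1 (hle.trans hcard)
  let A := A₀ ∪ A₁
  have hA : #A ≤ mu := mk_union_le' h0 _ _ hA₀ hA₁.le
  let V : Type u := mu.out
  have hV : #V = mu := mk_out mu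
  choose c hc1 hc2 hc3 using step hGCH hmu (G := G) V hV
  let T := mu.ord.ToType
  have hTc : #T = mu := by simp [T]
  let B : T → Subgroup G := (wellFounded_lt (α := T)).fix fun t ih =>
    Subgroup.closure (A ∪ ⋃ s : Set.Iio t, c (ih s.1 s.2))
  have hB : ∀ t, B t = Subgroup.closure (A ∪ ⋃ s : Set.Iio t, c (B s.1)) := by
    intro t
    exact (wellFounded_lt (α := T)).fix_eq _ t
  have hBA : ∀ t, A ⊆ B t := fun t => by
    rw [hB]; exact Set.subset_union_left.trans Subgroup.subset_closure
  have hBc : ∀ s t, s < t → c (B s) ⊆ B t := fun s t hst => by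
    rw [hB t]
    exact (Set.subset_iUnion (fun s : Set.Iio t => c (B s.1)) ⟨s, hst⟩).trans
      (Set.subset_union_right.trans Subgroup.subset_closure)
  have hmono : Monotone B := by
    intro s t hst
    rcases hst.eq_or_lt with rfl | h
    · exact le_rfl
    · exact (hc2 (B s)).trans (hBc s t h)
  have hBcard : ∀ t, #(B t) ≤ mu := by
    intro t
    induction t using (wellFounded_lt (α := T)).induction with
    | _ t ih =>
      rw [hB]
      refine mk_closure_le h0 _ (mk_union_le' h0 _ _ hA (mk_iUnion_le' h0 _ ?_ ?_))
      · exact (mk_set_le _).trans hTc.le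
      · exact fun s => hc1 _ (ih s.1 s.2)
  obtain ⟨t₀, -⟩ := bounded_small hmu (∅ : Set T) (by simpa using hmu.pos)
  have : Nonempty T := ⟨t₀⟩
  let K : Subgroup G := ⨆ t, B t
  have hKmem : ∀ x, x ∈ K ↔ ∃ t, x ∈ B t := fun x =>
    Subgroup.mem_iSup_of_directed hmono.directed_le
  have hBK : ∀ t, B t ≤ K := fun t => le_iSup B t
  have hAK : A ⊆ K := (hBA t₀).trans (hBK t₀)
  refine ⟨K, ⟨?_, le_antisymm ?_ ?_⟩, Set.subset_union_left.trans hAK⟩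
  rotate_left
  · have : (K : Set G) = ⋃ t, (B t : Set G) := by
      ext x; simp [hKmem]
    have h2 := mk_iUnion_le' h0 (fun t => (B t : Set G)) hTc.le hBcard
    rw [← this] at h2
    exact h2
  · rw [← hA₁]
    exact mk_le_mk_of_subset (Set.subset_union_right.trans hAK)
  -- existential closedness
  intro X E I hE hI ⟨H, _, i, hi, vH, hvE, hvI⟩
  -- a solution in `G`
  obtain ⟨v, hv⟩ : ∃ v : X → G, Sol (Subtype.val : K → G) v E I := by
    obtain ⟨P, _, j, k, hj, hk, hjk⟩ := amalgam K.subtype i K.subtype_injective hi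
    let r : K ⊕ X → G ⊕ X := Sum.map Subtype.val id
    have hP : ∀ w, FreeGroup.lift (Sum.elim (⇑j) (k ∘ vH)) (FreeGroup.map r w) =
        k (FreeGroup.lift (Sum.elim (⇑i) vH) w) := by
      intro w
      rw [lift_map']
      apply map_lift
      rintro (a | x)
      · exact hjk a
      · rfl
    obtain ⟨v, h1, h2⟩ := hG X (FreeGroup.map r '' E) (FreeGroup.map r '' I)
      ((mk_image_le.trans_lt hE).trans_le hle) ((mk_image_le.trans_lt hI).trans_le hle)
      ⟨P, inferInstance, j, hj, k ∘ vH, by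
        rintro _ ⟨w, hw, rfl⟩
        rw [hP, hvE w hw, map_one], by
        rintro _ ⟨w, hw, rfl⟩
        rw [hP]
        intro h
        exact hvI w hw (hk (h.trans (map_one k).symm))⟩
    have hG' : ∀ w, FreeGroup.lift (Sum.elim (id : G → G) v) (FreeGroup.map r w) =
        FreeGroup.lift (Sum.elim (Subtype.val : K → G) v) w := by
      intro w
      rw [lift_map']
      congr 2
      funext a
      rcases a with a | x <;> rfl
    exact ⟨v, fun w hw => by rw [← hG']; exact h1 _ ⟨w, hw, rfl⟩,
      fun w hw => by rw [← hG']; exact h2 _ ⟨w, hw, rfl⟩⟩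
  -- supports
  choose supp hfin hsupp using support (α := K ⊕ X)
  let W : Set (K ⊕ X) := (⋃ w : E, supp w) ∪ (⋃ w : I, supp w)
  have hW : #W < mu := (mk_union_le _ _).trans_lt
    (add_lt_of_lt h0 (biUnion_small hmu E hE supp hfin) (biUnion_small hmu I hI supp hfin))
  have hWE : ∀ w ∈ E, supp w ⊆ W := fun w hw =>
    (Set.subset_iUnion (fun w : E => supp w) ⟨w, hw⟩).trans Set.subset_union_left
  have hWI : ∀ w ∈ I, supp w ⊆ W := fun w hw =>
    (Set.subset_iUnion (fun w : I => supp w) ⟨w, hw⟩).trans Set.subset_union_right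
  -- coefficients lie at a bounded stage
  have hstage : ∀ a : K, ∃ t, (a : G) ∈ B t := fun a => (hKmem a).1 a.2
  choose st hst using hstage
  obtain ⟨t, ht⟩ := bounded_small hmu
    ((fun a : K ⊕ X => Sum.elim st (fun _ => t₀) a) '' W) (mk_image_le.trans_lt hW)
  have htB : ∀ a : K, Sum.inl a ∈ W → (a : G) ∈ B t := fun a ha =>
    hmono (ht _ ⟨_, ha, rfl⟩).le (hst a)
  -- variables
  have hX₀ : #{x : X | Sum.inr x ∈ W} ≤ #V := by
    rw [hV]
    exact (mk_le_of_injective (f := fun x : {x : X | Sum.inr x ∈ W} => (⟨_, x.2⟩ : W))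
      (fun x y h => Subtype.ext (Sum.inr_injective (congrArg Subtype.val h)))).trans hW.le
  obtain ⟨e⟩ := hX₀
  have : Nonempty V := by
    rw [← mk_ne_zero_iff, hV]; exact hmu.ne_zero
  let f : X → V := fun x => if h : Sum.inr x ∈ W then e ⟨x, h⟩ else Classical.arbitrary V
  have hf : ∀ x (h : Sum.inr x ∈ W), f x = e ⟨x, h⟩ := fun x h => dif_pos h
  let g : K → B t := fun a => if h : (a : G) ∈ B t then ⟨a, h⟩ else 1
  have hg : ∀ a : K, Sum.inl a ∈ W → ((g a : B t) : G) = a := fun a ha => by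
    simp only [g, dif_pos (htB a ha)]
  let r : K ⊕ X → B t ⊕ V := Sum.map g f
  let v' : V → G := fun y => if h : ∃ x, e x = y then v h.choose else 1
  have hv' : ∀ x, Sum.inr x ∈ W → v' (f x) = v x := by
    intro x hx
    have hex : ∃ z, e z = f x := ⟨⟨x, hx⟩, (hf x hx).symm⟩
    have h1 : v' (f x) = v hex.choose := dif_pos hex
    rw [h1]
    have h3 := e.injective (hex.choose_spec.trans (hf x hx))
    rw [h3]
  have key : ∀ w, supp w ⊆ W → FreeGroup.lift (Sum.elim (Subtype.val : B t → G) v')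
      (FreeGroup.map r w) = FreeGroup.lift (Sum.elim (Subtype.val : K → G) v) w := by
    intro w hw
    rw [lift_map']
    apply hsupp
    rintro (a | x) ha
    · exact hg a (hw ha)
    · exact hv' x (hw ha)
  obtain ⟨u, huc, hu1, hu2⟩ := hc3 (B t) (FreeGroup.map r '' E) (FreeGroup.map r '' I)
    (mk_image_le.trans_lt hE) (mk_image_le.trans_lt hI) ⟨v', by
      rintro _ ⟨w, hw, rfl⟩
      rw [key w (hWE w hw)]; exact hv.1 w hw, by
      rintro _ ⟨w, hw, rfl⟩
      rw [key w (hWI w hw)]; exact hv.2 w hw⟩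
  obtain ⟨t', ht'⟩ := bounded_small hmu ({t} : Set T)
    (by simpa using one_lt_aleph0.trans_le h0)
  have huK : ∀ y, u y ∈ K := fun y => hBK t' (hBc t t' (ht' t rfl) (huc y))
  have key2 : ∀ w, supp w ⊆ W → FreeGroup.lift (Sum.elim (Subtype.val : B t → G) u)
      (FreeGroup.map r w) =
      K.subtype (FreeGroup.lift (Sum.elim (id : K → K) (fun x => ⟨u (f x), huK _⟩)) w) := by
    intro w hw
    rw [lift_map', ← map_lift K.subtype _ (fun a => K.subtype (Sum.elim (id : K → K)
      (fun x => ⟨u (f x), huK _⟩) a)) (fun a => rfl)]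
    apply hsupp
    rintro (a | x) ha
    · exact hg a (hw ha)
    · rfl
  refine ⟨fun x => ⟨u (f x), huK _⟩, fun w hw => ?_, fun w hw h => ?_⟩
  · apply K.subtype_injective
    rw [← key2 w (hWE w hw), map_one]
    exact hu1 _ ⟨w, hw, rfl⟩
  · apply hu2 _ ⟨w, hw, rfl⟩
    rw [key2 w (hWI w hw), h, map_one]

end ECAux

/-- Under GCH, if `G` is a `κ`-existentially closed group of cardinality `λ ≥ κ` and
`μ ≤ κ` is a regular cardinal, then `G` has a local system of `μ`-existentially closed
subgroups of cardinality `μ`: every finite subset of `G` lies in such a subgroup, and the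
family of such subgroups is directed under inclusion. -/
theorem stmt_13 (hGCH : GCH.{u}) (κ mu : Cardinal.{u}) (hmu : mu.IsRegular) (hle : mu ≤ κ)
    (G : Type u) [Group G] (hG : IsKappaEC κ G) (hcard : κ ≤ Cardinal.mk G) :
    (∀ F : Finset G, ∃ K : Subgroup G,
      (IsKappaEC mu K ∧ Cardinal.mk K = mu) ∧ (F : Set G) ⊆ (K : Set G)) ∧
    DirectedOn (· ≤ ·) {K : Subgroup G | IsKappaEC mu K ∧ Cardinal.mk K = mu} := by
  refine ⟨fun F => ?_, ?_⟩
  · exact ECAux.main hGCH hmu hle G hG hcard (F : Set G)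
      ((F.finite_toSet.lt_aleph0).le.trans hmu.aleph0_le)
  · intro K₁ h₁ K₂ h₂
    obtain ⟨K, hK, hsub⟩ := ECAux.main hGCH hmu hle G hG hcard ((K₁ : Set G) ∪ K₂)
      (ECAux.mk_union_le' hmu.aleph0_le _ _ h₁.2.le h₂.2.le)
    exact ⟨K, hK, Set.subset_union_left.trans hsub, Set.subset_union_right.trans hsub⟩
end

section
/- Assume GCH. For every uncountable cardinal κ there exists a universal group of cardinality κ. -/
universe u

/-- A group `U` is universal if every group of cardinality at most `|U|` embeds into it. -/
def IsUniversalGroup (U : Type u) [Group U] : Prop :=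
  ∀ (K : Type u) [Group K], Cardinal.mk K ≤ Cardinal.mk U →
    ∃ f : K →* U, Function.Injective f

open Cardinal

namespace UG

section decode

variable {ι : Type u} [LinearOrder ι] {Y : ι → Type u} [∀ i, AddCommGroup (Y i)]

/-- Permutations changing only coordinates `≤ a`, depending only on coordinates `≤ a`. -/
def Q (a : ι) (σ : Equiv.Perm (Π₀ i, Y i)) : Prop :=
  (∀ x i, a < i → σ x i = x i) ∧
    ∀ x y, (∀ i, i ≤ a → x i = y i) → ∀ i, i ≤ a → σ x i = σ y i

lemma Q_mono {a b : ι} (hab : a ≤ b) {σ : Equiv.Perm (Π₀ i, Y i)}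
    (h : Q a σ) : Q b σ := by
  refine ⟨fun x i hi => h.1 x i (hab.trans_lt hi), fun x y hxy i hi => ?_⟩
  rcases le_or_gt i a with hia | hia
  · exact h.2 x y (fun j hj => hxy j (hj.trans hab)) i hia
  · rw [h.1 x i hia, h.1 y i hia, hxy i hi]

lemma Q_mul {a : ι} {σ τ : Equiv.Perm (Π₀ i, Y i)} (h : Q a σ) (h' : Q a τ) : Q a (σ * τ) := by
  refine ⟨fun x i hi => ?_, fun x y hxy i hi => ?_⟩
  · rw [Equiv.Perm.mul_apply, h.1 _ i hi, h'.1 _ i hi]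
  · exact h.2 _ _ (fun j hj => h'.2 x y hxy j hj) i hi

/-- The group of bounded permutations. -/
def bdd (Y : ι → Type u) [∀ i, AddCommGroup (Y i)] [Nonempty ι] :
    Subgroup (Equiv.Perm (Π₀ i, Y i)) where
  carrier := {σ | ∃ a, Q a σ ∧ Q a σ⁻¹}
  one_mem' := by
    obtain ⟨a⟩ := ‹Nonempty ι›
    refine ⟨a, ?_, ?_⟩
    · exact ⟨fun x i _ => rfl, fun x y h i hi => h i hi⟩
    · exact ⟨fun x i _ => rfl, fun x y h i hi => h i hi⟩
  mul_mem' := by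
    rintro σ τ ⟨a, h1, h2⟩ ⟨b, h3, h4⟩
    refine ⟨max a b, Q_mul (Q_mono (le_max_left _ _) h1) (Q_mono (le_max_right _ _) h3), ?_⟩
    rw [mul_inv_rev]
    exact Q_mul (Q_mono (le_max_right _ _) h4) (Q_mono (le_max_left _ _) h2)
  inv_mem' := by
    rintro σ ⟨a, h1, h2⟩
    exact ⟨a, h2, by rwa [inv_inv]⟩

/-- A filtration of a group with transversals indexed by `Y`. -/
structure Filt (Y : ι → Type u) [∀ i, AddCommGroup (Y i)] (G : Type u) [Group G] where
  A : ι → Subgroup G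
  B : ι → Subgroup G
  τ : ∀ i, Y i → G
  AB : ∀ i, A i ≤ B i
  BA : ∀ j i, j < i → B j ≤ A i
  Alim : ∀ i g, g ∈ A i → g = 1 ∨ ∃ j < i, g ∈ B j
  Btop : ∀ g, ∃ i, g ∈ B i
  τ0 : ∀ i, τ i 0 = 1
  τB : ∀ i y, τ i y ∈ B i
  τsurj : ∀ i, ∀ g ∈ B i, ∃ y, (τ i y)⁻¹ * g ∈ A i
  τinj : ∀ i y y', (τ i y)⁻¹ * τ i y' ∈ A i → y = y'

open Classical in
lemma bound (x : Π₀ i, Y i) : x = 0 ∨ ∃ j, x j ≠ 0 ∧ ∀ k, j < k → x k = 0 := by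
  rcases x.support.eq_empty_or_nonempty with h | h
  · left; simpa using h
  · right
    refine ⟨x.support.max' h, ?_, fun k hk => ?_⟩
    · simpa using x.support.max'_mem h
    · by_contra hne
      exact absurd (x.support.le_max' k (by simpa using hne)) (not_le.2 hk)

lemma bound_lt {i : ι} (x : Π₀ i, Y i) (h : ∀ k, i ≤ k → x k = 0) :
    x = 0 ∨ ∃ j < i, ∀ k, j < k → x k = 0 := by
  rcases bound x with h0 | ⟨j, hj, hk⟩
  · exact Or.inl h0
  · refine Or.inr ⟨j, ?_, hk⟩
    by_contra hlt
    exact hj (h j (not_lt.1 hlt))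

variable {G : Type u} [Group G] (F : Filt Y G)

open Classical in
/-- Decode a normal form. -/
noncomputable def D (x : Π₀ i, Y i) : G :=
  ((x.support.sort (fun a b => b ≤ a)).map (fun i => F.τ i (x i))).prod

lemma D_zero : D F 0 = 1 := by simp [D]

open Classical in
lemma D_step (i : ι) (x : Π₀ i, Y i) (h : ∀ k, i < k → x k = 0) :
    D F x = F.τ i (x i) * D F (x.erase i) := by
  by_cases hx : x i = 0
  · have : x.erase i = x := by
      ext j
      by_cases hj : j = i
      · subst hj; simp [hx]
      · simp [hj]
    rw [this, hx, F.τ0, one_mul]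
  · have hs : x.support = insert i (x.erase i).support := by
      rw [DFinsupp.support_erase, Finset.insert_erase]; simpa using hx
    have hni : i ∉ (x.erase i).support := by simp
    unfold D
    rw [hs, Finset.sort_insert]
    · rw [List.map_cons, List.prod_cons]
      congr 2
      apply List.map_congr_left
      intro j hj
      have : j ∈ (x.erase i).support := by simpa using hj
      have hji : j ≠ i := fun h => hni (h ▸ this)
      simp [hji]
    · intro b hb
      by_contra hlt
      have : x b ≠ 0 := by
        have hb' := hb
        simp only [DFinsupp.support_erase, Finset.mem_erase, DFinsupp.mem_support_iff] at hb'
        exact hb'.2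
      exact this (h b (not_le.1 hlt))
    · exact hni

lemma erase_lt [DecidableEq ι] (i : ι) (x : Π₀ i, Y i) (h : ∀ k, i < k → x k = 0) :
    ∀ k, i ≤ k → (x.erase i) k = 0 := by
  intro k hk
  rcases hk.eq_or_lt with rfl | hk
  · simp
  · simp [hk.ne', h k hk]

variable [WellFoundedLT ι]

lemma D_memB (i : ι) : ∀ x : Π₀ i, Y i, (∀ k, i < k → x k = 0) → D F x ∈ F.B i := by
  classical
  induction i using WellFoundedLT.induction with
  | ind i ih =>
    intro x hx
    rw [D_step F i x hx]
    refine mul_mem (F.τB _ _) ?_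
    rcases bound_lt _ (erase_lt i x hx) with h0 | ⟨j, hj, hk⟩
    · rw [h0, D_zero]; exact one_mem _
    · exact F.AB _ (F.BA j i hj (ih j hj _ hk))

lemma D_memA (i : ι) (x : Π₀ i, Y i) (hx : ∀ k, i ≤ k → x k = 0) : D F x ∈ F.A i := by
  rcases bound_lt x hx with h0 | ⟨j, hj, hk⟩
  · rw [h0, D_zero]; exact one_mem _
  · exact F.BA j i hj (D_memB F j _ hk)

lemma D_surj (i : ι) : ∀ g ∈ F.B i, ∃ x : Π₀ i, Y i, (∀ k, i < k → x k = 0) ∧ D F x = g := by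
  classical
  induction i using WellFoundedLT.induction with
  | ind i ih =>
    intro g hg
    obtain ⟨y, hy⟩ := F.τsurj i g hg
    have : ∃ x : Π₀ i, Y i, (∀ k, i ≤ k → x k = 0) ∧ D F x = (F.τ i y)⁻¹ * g := by
      rcases F.Alim i _ hy with h1 | ⟨j, hj, hB⟩
      · exact ⟨0, fun _ _ => rfl, by rw [h1, D_zero]⟩
      · obtain ⟨x, hx, hD⟩ := ih j hj _ hB
        exact ⟨x, fun k hk => hx k (hj.trans_le hk), hD⟩
    obtain ⟨x, hx, hD⟩ := this
    have hsup : ∀ k, i < k → (x + DFinsupp.single i y) k = 0 := by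
      intro k hk
      simp [hx k hk.le, hk.ne]
    refine ⟨x + DFinsupp.single i y, hsup, ?_⟩
    rw [D_step F i _ hsup]
    have : (x + DFinsupp.single i y).erase i = x := by
      ext j
      by_cases hj : j = i
      · subst hj; simp [hx j le_rfl]
      · simp [hj]
    rw [this, hD]
    simp [hx i le_rfl]

lemma D_inj (i : ι) : ∀ x y : Π₀ i, Y i, (∀ k, i < k → x k = 0) → (∀ k, i < k → y k = 0) →
    D F x = D F y → x = y := by
  classical
  induction i using WellFoundedLT.induction with
  | ind i ih =>
    intro x y hx hy h
    rw [D_step F i x hx, D_step F i y hy] at h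
    have hex := erase_lt i x hx
    have hey := erase_lt i y hy
    have hi : x i = y i := by
      apply F.τinj i
      have : (F.τ i (x i))⁻¹ * F.τ i (y i) = D F (x.erase i) * (D F (y.erase i))⁻¹ := by
        rw [inv_mul_eq_iff_eq_mul, ← mul_assoc, h]; group
      rw [this]
      exact mul_mem (D_memA F i _ hex) (inv_mem (D_memA F i _ hey))
    rw [hi] at h
    have h' := mul_left_cancel h
    have he : x.erase i = y.erase i := by
      rcases bound_lt _ hex with h0 | ⟨j, hj, hk⟩ <;> rcases bound_lt _ hey with h0' | ⟨j', hj', hk'⟩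
      · rw [h0, h0']
      · exact ih j' hj' _ _ (by rw [h0]; intros; rfl) hk' h'
      · exact ih j hj _ _ hk (by rw [h0']; intros; rfl) h'
      · exact ih (max j j') (max_lt hj hj') _ _
          (fun k hm => hk k ((le_max_left _ _).trans_lt hm))
          (fun k hm => hk' k ((le_max_right _ _).trans_lt hm)) h'
    rw [← DFinsupp.single_add_erase i x, ← DFinsupp.single_add_erase i y, hi, he]

lemma D_bij : Function.Bijective (D F) := by
  constructor
  · intro x y h
    obtain ⟨i0, -⟩ := F.Btop 1
    have hb : ∀ z : Π₀ i, Y i, ∃ j, ∀ k, j < k → z k = 0 := by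
      intro z
      rcases bound z with h0 | ⟨j, -, hj⟩
      · exact ⟨i0, by rw [h0]; intros; rfl⟩
      · exact ⟨j, hj⟩
    obtain ⟨j, hj⟩ := hb x
    obtain ⟨j', hj'⟩ := hb y
    exact D_inj F (max j j') x y (fun k hm => hj k ((le_max_left _ _).trans_lt hm))
          (fun k hm => hj' k ((le_max_right _ _).trans_lt hm)) h
  · intro g
    obtain ⟨i, hi⟩ := F.Btop g
    obtain ⟨x, -, hx⟩ := D_surj F i g hi
    exact ⟨x, hx⟩

lemma D_add_aux (a : ι) (w : Π₀ i, Y i) (hw : ∀ k, a < k → w k = 0) (i : ι) :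
    ∀ u : Π₀ i, Y i, (∀ k, i < k → u k = 0) → (∀ k, k ≤ a → u k = 0) →
      D F (u + w) = D F u * D F w := by
  classical
  induction i using WellFoundedLT.induction with
  | ind i ih =>
    intro u hi hu
    rcases le_or_gt i a with hia | hia
    · have : u = 0 := by
        ext k
        rcases le_or_gt k a with hk | hk
        · simp [hu k hk]
        · simp [hi k (hia.trans_lt hk)]
      rw [this, zero_add, D_zero, one_mul]
    · have hs : ∀ k, i < k → (u + w) k = 0 := by
        intro k hk
        simp [hi k hk, hw k (hia.trans hk)]
      have hwe : w.erase i = w := by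
        ext j
        by_cases hj : j = i
        · subst hj; simp [hw j hia]
        · simp [hj]
      rw [D_step F i _ hs, D_step F i _ hi, DFinsupp.erase_add, hwe, mul_assoc]
      congr 1
      · simp [hw i hia]
      · rcases bound_lt _ (erase_lt i u hi) with h0 | ⟨j, hj, hk⟩
        · rw [h0, zero_add, D_zero, one_mul]
        · refine ih j hj _ hk (fun k hka => ?_)
          simp [hu k hka]

lemma D_add (a : ι) (u w : Π₀ i, Y i) (hw : ∀ k, a < k → w k = 0) (hu : ∀ k, k ≤ a → u k = 0) :
    D F (u + w) = D F u * D F w := by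
  rcases bound u with h0 | ⟨j, -, hj⟩
  · rw [h0, zero_add, D_zero, one_mul]
  · exact D_add_aux F a w hw j u hj hu

/-- The representation. -/
noncomputable def rep : G →* Equiv.Perm (Π₀ i, Y i) where
  toFun g := ((Equiv.ofBijective _ (D_bij F)).trans (Equiv.mulRight g⁻¹)).trans
    (Equiv.ofBijective _ (D_bij F)).symm
  map_one' := by ext1 x; simp
  map_mul' g h := by ext1 x; simp [mul_assoc, Equiv.ofBijective_apply_symm_apply]

lemma D_rep (g : G) (x : Π₀ i, Y i) : D F (rep F g x) = D F x * g⁻¹ := by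
  change (Equiv.ofBijective _ (D_bij F)) ((Equiv.ofBijective _ (D_bij F)).symm _) = _
  rw [Equiv.apply_symm_apply]; rfl

lemma rep_inj : Function.Injective (rep F) := by
  intro g h e
  have h1 := D_rep F g 0
  rw [e, D_rep F h 0] at h1
  simpa using h1.symm

lemma rep_Q (a : ι) (g : G) (hg : g ∈ F.B a) : Q a (rep F g) := by
  classical
  have key : ∀ l : Π₀ i, Y i, (∀ k, a < k → l k = 0) → ∃ w : Π₀ i, Y i,
      (∀ k, a < k → w k = 0) ∧ ∀ u : Π₀ i, Y i, (∀ k, k ≤ a → u k = 0) →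
        rep F g (u + l) = u + w := by
    intro l hl
    obtain ⟨w, hw, hD⟩ := D_surj F a (D F l * g⁻¹) (mul_mem (D_memB F a l hl) (inv_mem hg))
    refine ⟨w, hw, fun u hu => ?_⟩
    apply (D_bij F).1
    rw [D_rep, D_add F a u l hl hu, D_add F a u w hw hu, hD, mul_assoc]
  have split : ∀ x : Π₀ i, Y i, x.filter (fun k => ¬ k ≤ a) + x.filter (fun k => k ≤ a) = x := by
    intro x
    ext k
    by_cases hk : k ≤ a <;> simp [DFinsupp.filter_apply, hk]
  have hl : ∀ (x : Π₀ i, Y i) k, a < k → x.filter (fun k => k ≤ a) k = 0 := by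
    intro x k hk
    simp [DFinsupp.filter_apply, hk]
  have hu : ∀ (x : Π₀ i, Y i) k, k ≤ a → x.filter (fun k => ¬ k ≤ a) k = 0 := by
    intro x k hk
    simp [DFinsupp.filter_apply, hk]
  constructor
  · intro x i hi
    obtain ⟨w, hw, h⟩ := key _ (hl x)
    have := h _ (hu x)
    rw [split] at this
    rw [this]
    simp [DFinsupp.filter_apply, hi, hw i hi]
  · intro x y hxy i hi
    have e : x.filter (fun k => k ≤ a) = y.filter (fun k => k ≤ a) := by
      ext k
      by_cases hk : k ≤ a <;> simp [DFinsupp.filter_apply, hk]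
      exact hxy k hk
    obtain ⟨w, hw, h⟩ := key _ (hl x)
    have h1 := h _ (hu x)
    have h2 := h _ (hu y)
    rw [split] at h1
    rw [e, split] at h2
    rw [h1, h2, DFinsupp.add_apply, DFinsupp.add_apply, hu x i hi, hu y i hi]

lemma rep_mem [Nonempty ι] (g : G) : rep F g ∈ bdd Y := by
  obtain ⟨a, ha⟩ := F.Btop g
  refine ⟨a, rep_Q F a g ha, ?_⟩
  rw [← map_inv]
  exact rep_Q F a _ (inv_mem ha)

end decode

section filt

variable {ι : Type u} [LinearOrder ι]

/-- The coordinate groups. -/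
abbrev YY (i : ι) : Type u := (Set.Iic i) →₀ ℤ

/-- The set acted on. -/
abbrev XX (ι : Type u) [LinearOrder ι] : Type u := Π₀ i : ι, YY i

/-- cardinality bound -/
noncomputable def m (i : ι) : Cardinal.{u} := max #(Set.Iic i) ℵ₀

lemma m_inf (i : ι) : ℵ₀ ≤ m i := le_max_right _ _

lemma mk_YY (i : ι) : #(YY i) = m i := by
  have : Nonempty (Set.Iic i) := ⟨⟨i, le_rfl⟩⟩
  simp [YY, m]

lemma mk_le (a : ι) : #{x : XX ι // ∀ k, a < k → x k = 0} ≤ m a := by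
  classical
  let f : {x : XX ι // ∀ k, a < k → x k = 0} → Π₀ i : {k : ι // k ≤ a}, YY i.1 :=
    fun x => x.1.subtypeDomain (fun k => k ≤ a)
  have hf : Function.Injective f := by
    rintro ⟨x, hx⟩ ⟨y, hy⟩ h
    rw [Subtype.mk.injEq]
    refine DFinsupp.ext fun k => ?_
    rcases le_or_gt k a with hk | hk
    · exact DFunLike.congr_fun h ⟨k, hk⟩
    · rw [hx k hk, hy k hk]
  refine (mk_le_of_injective hf).trans ?_
  have e : ((Σ i : {k : ι // k ≤ a}, Set.Iic i.1) →₀ ℤ) ≃ Π₀ i : {k : ι // k ≤ a}, YY i.1 :=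
    sigmaFinsuppEquivDFinsupp
  rw [← mk_congr e]
  have : Nonempty (Σ i : {k : ι // k ≤ a}, Set.Iic i.1) := ⟨⟨⟨a, le_rfl⟩, ⟨a, le_rfl⟩⟩⟩
  have h1 : #((Σ i : {k : ι // k ≤ a}, Set.Iic i.1) →₀ ℤ) =
      max #(Σ i : {k : ι // k ≤ a}, Set.Iic i.1) ℵ₀ := by simp [-mk_sigma]
  rw [h1]
  refine max_le ?_ (m_inf a)
  let g : (Σ i : {k : ι // k ≤ a}, Set.Iic i.1) → Set.Iic a × Set.Iic a :=
    fun p => (⟨p.1.1, p.1.2⟩, ⟨p.2.1, le_trans p.2.2 p.1.2⟩)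
  have hg : Function.Injective g := by
    rintro ⟨⟨i, hi⟩, ⟨j, hj⟩⟩ ⟨⟨i', hi'⟩, ⟨j', hj'⟩⟩ h
    have h1 : i = i' := congrArg (fun p => p.1.1) h
    have h2 : j = j' := congrArg (fun p => p.2.1) h
    subst h1 h2
    rfl
  refine (mk_le_of_injective hg).trans ?_
  rw [← mul_def]
  refine (mul_le_mul' (le_max_left _ ℵ₀) (le_max_left _ ℵ₀)).trans ?_
  exact (mul_eq_self (m_inf a)).le

lemma mk_Q (a : ι) : #{σ : Equiv.Perm (XX ι) // Q a σ} ≤ 2 ^ m a := by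
  classical
  let Z := {x : XX ι // ∀ k, a < k → x k = 0}
  let f : {σ : Equiv.Perm (XX ι) // Q a σ} → Z → Z :=
    fun σ x => ⟨σ.1 x.1, fun k hk => by rw [σ.2.1 _ k hk, x.2 k hk]⟩
  have hf : Function.Injective f := by
    rintro ⟨σ, hσ⟩ ⟨τ, hτ⟩ h
    rw [Subtype.mk.injEq]
    refine Equiv.ext fun x => DFinsupp.ext fun k => ?_
    rcases le_or_gt k a with hk | hk
    · have hz : ∀ k, a < k → x.filter (fun k => k ≤ a) k = 0 := by
        intro k hk
        simp [DFinsupp.filter_apply, hk]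
      have hx : ∀ k, k ≤ a → x k = x.filter (fun k => k ≤ a) k := by
        intro k hk
        simp [DFinsupp.filter_apply, hk]
      rw [hσ.2 _ _ hx k hk, hτ.2 _ _ hx k hk]
      have := congrArg Subtype.val (congrFun h ⟨_, hz⟩)
      exact DFunLike.congr_fun this k
    · rw [hσ.1 x k hk, hτ.1 x k hk]
  refine (mk_le_of_injective hf).trans ?_
  have h0 : (#Z) ≠ 0 := mk_ne_zero_iff.2 ⟨⟨0, fun _ _ => rfl⟩⟩
  calc #(Z → Z) = #Z ^ #Z := by simp
    _ ≤ m a ^ m a := (power_le_power_left h0 (mk_le a)).trans (power_le_power_right (mk_le a))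
    _ = 2 ^ m a := power_self_eq (m_inf a)

lemma mk_closure_le' {H : Type u} [Group H] (s : Set H) :
    #(Subgroup.closure s) ≤ max #s ℵ₀ := by
  rw [FreeGroup.closure_eq_range]
  refine (mk_le_of_surjective (MonoidHom.rangeRestrict_surjective _)).trans ?_
  rcases isEmpty_or_nonempty s with h | h
  · exact (mk_le_aleph0 (α := FreeGroup s)).trans (le_max_right _ _)
  · rw [mk_freeGroup]

/-- Elements supported on `S`. -/
noncomputable def L (S : Set ι) : AddSubgroup (XX ι) where
  carrier := {x | ∀ k, k ∉ S → x k = 0}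
  zero_mem' := fun _ _ => rfl
  add_mem' := by
    intro x y hx hy k hk
    rw [DFinsupp.add_apply, hx k hk, hy k hk, add_zero]
  neg_mem' := by
    intro x hx k hk
    rw [DFinsupp.neg_apply, hx k hk, neg_zero]

variable {H : Type u} [Group H] (h : ι → H)

/-- Subgroup attached to `S`. -/
noncomputable def C (S : Set ι) : Subgroup (H × Multiplicative (XX ι)) :=
  (Subgroup.closure (h '' S)).prod (AddSubgroup.toSubgroup (L S))

lemma mem_C {S : Set ι} {g : H × Multiplicative (XX ι)} :
    g ∈ C h S ↔ g.1 ∈ Subgroup.closure (h '' S) ∧ ∀ k, k ∉ S → (Multiplicative.toAdd g.2) k = 0 :=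
  Iff.rfl

lemma C_mono {S T : Set ι} (hST : S ⊆ T) : C h S ≤ C h T := by
  intro g hg
  rw [mem_C] at *
  exact ⟨Subgroup.closure_mono (Set.image_mono hST) hg.1, fun k hk => hg.2 k (fun hs => hk (hST hs))⟩

lemma closure_lim (i : ι) (g : H) (hg : g ∈ Subgroup.closure (h '' Set.Iio i)) :
    g = 1 ∨ ∃ j < i, g ∈ Subgroup.closure (h '' Set.Iic j) := by
  have mono : ∀ {j k : ι}, j ≤ k → Subgroup.closure (h '' Set.Iic j) ≤
      Subgroup.closure (h '' Set.Iic k) := fun hjk =>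
    Subgroup.closure_mono (Set.image_mono (Set.Iic_subset_Iic.2 hjk))
  induction hg using Subgroup.closure_induction with
  | mem x hx =>
    obtain ⟨j, hj, rfl⟩ := hx
    exact Or.inr ⟨j, hj, Subgroup.subset_closure ⟨j, le_rfl, rfl⟩⟩
  | one => exact Or.inl rfl
  | mul x y _ _ hx hy =>
    rcases hx with rfl | ⟨j, hj, hx⟩
    · rwa [one_mul]
    · rcases hy with rfl | ⟨k, hk, hy⟩
      · rw [mul_one]; exact Or.inr ⟨j, hj, hx⟩
      · exact Or.inr ⟨max j k, max_lt hj hk,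
          mul_mem (mono (le_max_left _ _) hx) (mono (le_max_right _ _) hy)⟩
  | inv x _ hx =>
    rcases hx with rfl | ⟨j, hj, hx⟩
    · simp
    · exact Or.inr ⟨j, hj, inv_mem hx⟩

lemma mk_C (i : ι) : #(C h (Set.Iic i)) ≤ m i := by
  let f : C h (Set.Iic i) → Subgroup.closure (h '' Set.Iic i) ×
      {x : XX ι // ∀ k, i < k → x k = 0} :=
    fun g => (⟨g.1.1, g.2.1⟩, ⟨Multiplicative.toAdd g.1.2, fun k hk => g.2.2 k (not_le.2 hk)⟩)
  have hf : Function.Injective f := by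
    rintro ⟨⟨g, x⟩, h1⟩ ⟨⟨g', x'⟩, h2⟩ e
    simp only [f, Prod.mk.injEq, Subtype.mk.injEq] at e
    obtain ⟨rfl, e⟩ := e
    obtain rfl := Multiplicative.toAdd.injective e
    rfl
  refine (mk_le_of_injective hf).trans ?_
  rw [mk_prod, lift_id, lift_id]
  refine (mul_le_mul' (b := m i) ?_ (mk_le i)).trans (mul_eq_self (m_inf i)).le
  exact (mk_closure_le' _).trans (max_le_max mk_image_le le_rfl)

lemma exists_trans (i : ι) : ∃ e : YY i ≃ (C h (Set.Iic i)) ⧸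
    (C h (Set.Iio i)).subgroupOf (C h (Set.Iic i)), e 0 = QuotientGroup.mk 1 := by
  classical
  let Qt := (C h (Set.Iic i)) ⧸ (C h (Set.Iio i)).subgroupOf (C h (Set.Iic i))
  have h1 : #Qt ≤ #(YY i) := by
    rw [mk_YY]
    exact (mk_le_of_surjective QuotientGroup.mk_surjective).trans (mk_C h i)
  have h2 : #(YY i) ≤ #Qt := by
    let f : YY i → C h (Set.Iic i) := fun y =>
      ⟨(1, Multiplicative.ofAdd (DFinsupp.single i y)), one_mem _, fun k hk => by
        have : k ≠ i := fun hh => hk (hh ▸ le_rfl)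
        exact DFinsupp.single_eq_of_ne this⟩
    refine mk_le_of_injective (f := fun y => (QuotientGroup.mk (f y) : Qt)) ?_
    intro y y' e
    have e1 := QuotientGroup.eq.1 e
    rw [Subgroup.mem_subgroupOf, mem_C] at e1
    have e2 := e1.2 i (lt_irrefl i)
    have e3 : -y + y' = 0 := by simpa [f] using e2
    rw [neg_add_eq_zero] at e3
    exact e3
  obtain ⟨e⟩ := Cardinal.eq.1 (h2.antisymm h1)
  exact ⟨e.trans (Equiv.swap (e 0) (QuotientGroup.mk 1)), by simp⟩

lemma exists_filt (hh : Function.Surjective h) :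
    Nonempty (Filt (YY (ι := ι)) (H × Multiplicative (XX ι))) := by
  classical
  choose e he using exists_trans h
  let t : ∀ i : ι, YY i → C h (Set.Iic i) := fun i y => if y = 0 then 1 else (e i y).out
  have ht : ∀ i y, (QuotientGroup.mk (t i y) : (C h (Set.Iic i)) ⧸
    (C h (Set.Iio i)).subgroupOf (C h (Set.Iic i))) = e i y := by
    intro i y
    by_cases hy : y = 0
    · simp only [t, hy, if_true]; exact (he i).symm
    · simp only [t, hy, if_false]; exact QuotientGroup.out_eq' _
  refine ⟨⟨fun i => C h (Set.Iio i), fun i => C h (Set.Iic i), fun i y => (t i y).1,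
    fun i => C_mono h Set.Iio_subset_Iic_self, fun j i hji => C_mono h (fun k hk => lt_of_le_of_lt hk hji),
    ?_, ?_, ?_, fun i y => (t i y).2, ?_, ?_⟩⟩
  · intro i g hg
    have hx := bound_lt (i := i) (Multiplicative.toAdd g.2) (fun k hk => hg.2 k (not_lt.2 hk))
    have hz : ∀ j : ι, ∀ k, k ∉ Set.Iic j → (0 : XX ι) k = 0 := fun _ _ _ => rfl
    rcases closure_lim h i g.1 hg.1 with h1 | ⟨j, hj, hg1⟩
    · rcases hx with h2 | ⟨k, hk, hx⟩
      · left
        exact Prod.ext h1 (Multiplicative.toAdd.injective h2)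
      · right
        refine ⟨k, hk, ?_, fun l hl => hx l (not_le.1 hl)⟩
        change g.1 ∈ Subgroup.closure (h '' Set.Iic k)
        rw [h1]; exact one_mem _
    · rcases hx with h2 | ⟨k, hk, hx⟩
      · refine Or.inr ⟨j, hj, hg1, fun l hl => ?_⟩
        rw [h2]; rfl
      · refine Or.inr ⟨max j k, max_lt hj hk, ?_, fun l hl => hx l ?_⟩
        · exact Subgroup.closure_mono (Set.image_mono (Set.Iic_subset_Iic.2 (le_max_left _ _))) hg1
        · exact (le_max_right _ _).trans_lt (not_le.1 hl)
  · intro g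
    obtain ⟨i, hi⟩ := hh g.1
    have hx : ∃ j : ι, ∀ k, j < k → (Multiplicative.toAdd g.2) k = 0 := by
      rcases bound (Multiplicative.toAdd g.2) with h0 | ⟨j, -, hj⟩
      · exact ⟨i, by rw [h0]; intros; rfl⟩
      · exact ⟨j, hj⟩
    obtain ⟨j, hj⟩ := hx
    refine ⟨max i j, ?_, fun l hl => hj l ((le_max_right _ _).trans_lt (not_le.1 hl))⟩
    exact Subgroup.subset_closure ⟨i, le_max_left _ _, hi⟩
  · intro i
    simp [t]
  · intro i g hg
    refine ⟨(e i).symm (QuotientGroup.mk ⟨g, hg⟩), ?_⟩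
    have := ht i ((e i).symm (QuotientGroup.mk ⟨g, hg⟩))
    rw [Equiv.apply_symm_apply] at this
    exact Subgroup.mem_subgroupOf.1 (QuotientGroup.eq.1 this)
  · intro i y y' hy
    apply (e i).injective
    rw [← ht, ← ht]
    exact QuotientGroup.eq.2 (Subgroup.mem_subgroupOf.2 hy)

lemma exists_embed [WellFoundedLT ι] [Nonempty ι] (K : Type u) [Group K] (hK : #K ≤ #ι) :
    ∃ f : K →* bdd (YY (ι := ι)), Function.Injective f := by
  obtain ⟨g⟩ := Cardinal.le_def _ _ |>.1 hK
  obtain ⟨F⟩ := exists_filt (Function.invFun g) (Function.invFun_surjective g.injective)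
  refine ⟨((rep F).codRestrict _ (rep_mem F)).comp (MonoidHom.inl K _), ?_⟩
  intro a b hab
  have h1 : rep F (a, 1) = rep F (b, 1) := congrArg Subtype.val hab
  exact congrArg Prod.fst (rep_inj F h1)

end filt

end UG

/-- Under GCH, for every uncountable cardinal `κ` there exists a universal group of
cardinality `κ`. -/
theorem stmt_14 (hGCH : GCH.{u}) (κ : Cardinal.{u}) (hκ : Cardinal.aleph0 < κ) :
    ∃ (U : Type u) (_ : Group U), Cardinal.mk U = κ ∧ IsUniversalGroup U := by
  classical
  let ι := κ.ord.ToType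
  have hι : #ι = κ := Cardinal.mk_ord_toType κ
  have hne : Nonempty ι := by
    rw [← Cardinal.mk_ne_zero_iff, hι]
    exact (aleph0_pos.trans hκ).ne'
  have hm : ∀ a : ι, UG.m a < κ := by
    intro a
    refine max_lt ?_ hκ
    have h1 : #(Set.Iio a) < #ι := mk_Iio_lt a (by rw [hι]; exact (Ordinal.type_toType _).symm)
    rw [hι] at h1
    have h2 : #(Set.Iic a) ≤ #(Set.Iio a) + 1 := by
      rw [← Set.Iio_insert]
      exact mk_insert_le
    exact h2.trans_lt (add_lt_of_lt hκ.le h1 (one_lt_aleph0.trans hκ))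
  have hU : #(UG.bdd (UG.YY (ι := ι))) = κ := by
    apply le_antisymm
    · let f : UG.bdd (UG.YY (ι := ι)) → Σ a : ι, {σ : Equiv.Perm (UG.XX ι) // UG.Q a σ} :=
        fun σ => ⟨σ.2.choose, σ.1, σ.2.choose_spec.1⟩
      have hf : Function.Injective f := by
        intro σ τ hst
        have : ((f σ).2).1 = ((f τ).2).1 := by rw [hst]
        exact Subtype.ext this
      refine (mk_le_of_injective hf).trans ?_
      rw [mk_sigma]
      calc Cardinal.sum (fun a : ι => #{σ : Equiv.Perm (UG.XX ι) // UG.Q a σ})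
          ≤ Cardinal.sum (fun _ : ι => κ) := by
            refine sum_le_sum _ _ fun a => (UG.mk_Q a).trans ?_
            rw [hGCH _ (UG.m_inf a)]
            exact Order.succ_le_of_lt (hm a)
        _ = κ * κ := by rw [sum_const', hι]
        _ = κ := mul_eq_self hκ.le
    · obtain ⟨f, hf⟩ := UG.exists_embed (ι := ι) (FreeGroup ι) (by
        rw [mk_freeGroup, hι]; exact max_le le_rfl hκ.le)
      have := mk_le_of_injective hf
      rw [mk_freeGroup, hι] at this
      exact (le_max_left _ _).trans this
  refine ⟨UG.bdd (UG.YY (ι := ι)), inferInstance, hU, ?_⟩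
  intro K _ hK
  exact UG.exists_embed K (by rw [hι, ← hU]; exact hK)
end
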